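/- arXiv:2004.00792 — 4 statements merged into one kernel-verified Lean document; each statement's English description precedes it below -/
import Mathlib

section
/- Let μ and ξ be probability measures on a measurable space X, let α ∈ (0,1), and suppose ξ ≤ μ/α, i.e. ξ(A) ≤ μ(A)/α for every measurable A. Then there exists a measurable set X_α ⊆ X such that ξ(B) ≥ (1−α)μ(B) for every measurable B ⊆ X_α and μ(X_α) ≥ α². (One may take X_α = {x : dξ/dμ(x) ≥ 1−α}, noting that ξ ≤ μ/α makes ξ absolutely continuous with respect to μ.) -/
/-!
Instead of the superlevel set `{dξ/dμ ≥ 1 - α}`, the proof takes a positive set `S` in a Hahn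
decomposition of the signed measure `ξ - (1 - α) μ`, which avoids densities altogether. The bound
`(1 - α) μ ≤ ξ` then holds on every measurable subset of `S`, and the reverse inequality on
measurable subsets of `Sᶜ`. Splitting the total mass,
`1 = ξ S + ξ Sᶜ ≤ μ S / α + (1 - α) μ Sᶜ ≤ μ S / α + (1 - α)`, that is, `μ S ≥ α²`.
-/

open MeasureTheory

/-- If `μ` and `ξ` are probability measures with `ξ ≤ μ/α` for some `α ∈ (0,1)`, then there is
a measurable set `X_α` with `ξ(B) ≥ (1−α)μ(B)` for every measurable `B ⊆ X_α` and
`μ(X_α) ≥ α²`. -/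
theorem exists_set_density_lower_bound {X : Type*} [MeasurableSpace X]
    (μ ξ : Measure X) [IsProbabilityMeasure μ] [IsProbabilityMeasure ξ]
    (α : ℝ) (hα : α ∈ Set.Ioo (0:ℝ) 1)
    (hbound : ∀ A : Set X, MeasurableSet A → ξ A ≤ μ A / ENNReal.ofReal α) :
    ∃ Xα : Set X, MeasurableSet Xα ∧
      (∀ B : Set X, MeasurableSet B → B ⊆ Xα → ENNReal.ofReal (1 - α) * μ B ≤ ξ B) ∧
      ENNReal.ofReal (α ^ 2) ≤ μ Xα := by
  obtain ⟨h0, h1⟩ := hα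
  have : IsFiniteMeasure (ENNReal.ofReal (1 - α) • μ) := μ.smul_finite ENNReal.ofReal_ne_top
  obtain ⟨S, hS, hpos, hneg⟩ := hahn_decomposition ξ (ENNReal.ofReal (1 - α) • μ)
  refine ⟨S, hS, fun B hB hBS => by simpa using hpos B hB hBS, ?_⟩
  have hcompl : ξ.real Sᶜ ≤ 1 - α := by
    refine ENNReal.toReal_le_of_le_ofReal (by linarith) ((hneg Sᶜ hS.compl subset_rfl).trans ?_)
    simpa using mul_le_of_le_one_right' (a := ENNReal.ofReal (1 - α))
      (prob_le_one (μ := μ) (s := Sᶜ))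
  have hle : ξ.real S ≤ μ.real S / α := by
    have hne : μ S / ENNReal.ofReal α ≠ ⊤ :=
      ENNReal.div_ne_top (measure_ne_top μ S) (by simpa using h0)
    simpa [Measure.real, ENNReal.toReal_div, h0.le] using ENNReal.toReal_mono hne (hbound S hS)
  have hsum : ξ.real S + ξ.real Sᶜ = 1 := by
    rw [measureReal_add_measureReal_compl hS, probReal_univ]
  have hα_le : α ≤ μ.real S / α := by linarith
  rw [le_div_iff₀ h0] at hα_le
  refine (ENNReal.ofReal_le_iff_le_toReal (measure_ne_top μ S)).2 ?_
  rw [sq]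
  exact hα_le
end

section
/- Let f(x) = (x, x²)ᵀ, let μ be the uniform (Lebesgue) measure on [0,1], and for α ∈ (0,1] let ξ be the measure with density 1/α with respect to μ on the set [0, α/2] ∪ [1 − α/2, 1] and zero elsewhere. Then the 2×2 matrix M(ξ) = (1/α)∫_{[0,α/2] ∪ [1−α/2,1]} f(x) f(x)ᵀ dx satisfies det M(ξ) = (1/960)α²(α⁴ + 25 − 40α + 26α² − 8α³). -/
/-! The two intervals overlap in at most the point `1/2` (which happens at `α = 1`), hence are
almost everywhere disjoint, so every entry of the matrix is a sum of two monomial integrals,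
evaluated in closed form by `setIntegral_pow_IBOSS`. The formula for the determinant is then a
polynomial identity in `α`, after cancelling the two factors `1 / α`. -/

open MeasureTheory Matrix

theorem setIntegral_pow_IBOSS (α : ℝ) (hα : α ∈ Set.Ioc (0:ℝ) 1) (n : ℕ) :
    ∫ x in Set.Icc (0:ℝ) (α / 2) ∪ Set.Icc (1 - α / 2) 1, x ^ n
      = ((α / 2) ^ (n + 1) + 1 - (1 - α / 2) ^ (n + 1)) / (n + 1) := by
  obtain ⟨h0, h1⟩ := hα
  have hdisj : AEDisjoint volume (Set.Icc (0:ℝ) (α / 2)) (Set.Icc (1 - α / 2) 1) := by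
    refine measure_mono_null (t := {α / 2}) ?_ (measure_singleton _)
    rintro x ⟨⟨_, h⟩, ⟨h', _⟩⟩
    exact le_antisymm h (by linarith)
  have hint : ∀ a b : ℝ, IntegrableOn (fun x : ℝ => x ^ n) (Set.Icc a b) := fun a b =>
    (continuous_pow n).continuousOn.integrableOn_Icc
  rw [setIntegral_union₀ hdisj measurableSet_Icc.nullMeasurableSet (hint _ _) (hint _ _),
    integral_Icc_eq_integral_Ioc, integral_Icc_eq_integral_Ioc,
    ← intervalIntegral.integral_of_le (by linarith),
    ← intervalIntegral.integral_of_le (by linarith), integral_pow, integral_pow,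
    zero_pow n.succ_ne_zero, one_pow]
  ring

/-- Asymptotic information matrix of IBOSS for quadratic regression `y = θ₁x + θ₂x²` with
`x` uniform on `[0,1]`: with `f(x) = (x, x²)ᵀ` and `ξ` the measure with density `1/α` w.r.t.
the uniform measure on `[0, α/2] ∪ [1−α/2, 1]`, the matrix
`M(ξ) = (1/α)∫_{[0,α/2]∪[1−α/2,1]} f(x)f(x)ᵀ dx` satisfies
`det M(ξ) = (1/960)α²(α⁴ + 25 − 40α + 26α² − 8α³)`. -/
theorem det_IBOSS_quadratic (α : ℝ) (hα : α ∈ Set.Ioc (0:ℝ) 1) :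
    (Matrix.of fun i j : Fin 2 =>
        (1 / α) * ∫ x in Set.Icc (0:ℝ) (α / 2) ∪ Set.Icc (1 - α / 2) 1,
          x ^ ((i : ℕ) + (j : ℕ) + 2)).det
      = (1 / 960) * α ^ 2 * (α ^ 4 + 25 - 40 * α + 26 * α ^ 2 - 8 * α ^ 3) := by
  have hne : α ≠ 0 := hα.1.ne'
  simp only [setIntegral_pow_IBOSS α hα, det_fin_two, of_apply]
  norm_num
  field_simp
  ring
end

section
/- Let μ be the uniform probability measure on [−1,1]² (density 1/4), let f(x) = (1, x₁, x₂)ᵀ, and let α ∈ [1 − π/4, 1). Set R_α = 2√((1−α)/π) and S = [−1,1]² \ B₂(0, R_α), where B₂(0,R) is the open Euclidean ball of radius R. Then μ(S) = α, and M = (1/α)∫_S f(x) f(x)ᵀ μ(dx) = diag{1, ρ_α, ρ_α} with ρ_α = (1/(2α))[2/3 − 2(1−α)²/π]. -/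
/-!
Since `R_α ≤ 1`, the ball lies inside the square, so every moment of `S` is the moment of the
square minus that of the ball. The moments of `x₀`, `x₁` and `x₀x₁` vanish because `S` is invariant
under the reflections `coordReflect`, and those of `x₀²` and `x₁²` agree because `S` is invariant
under `coordSwap`. The remaining second moment is `4/3 - π R⁴ / 4`: Fubini gives the square's
share (`setIntegral_euclideanSquare_sq`), and the ball's share is half the integral of `‖x‖²`,
computed in polar coordinates (`setIntegral_ball_sq`). Substituting `R_α² = 4(1 - α)/π` gives the
claim.
-/

open MeasureTheory

/-- The square `[-1,1]²` inside the Euclidean plane. -/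
def euclideanSquare : Set (EuclideanSpace ℝ (Fin 2)) :=
  {x | ∀ i, x i ∈ Set.Icc (-1:ℝ) 1}

lemma euclideanSquare_eq_preimage :
    euclideanSquare = WithLp.ofLp ⁻¹' (Set.univ.pi fun _ : Fin 2 => Set.Icc (-1:ℝ) 1) := by
  ext x
  simp only [euclideanSquare, Set.mem_preimage, Set.mem_univ_pi, Set.mem_ofPred_eq]

lemma measurableSet_euclideanSquare : MeasurableSet euclideanSquare := by
  rw [euclideanSquare_eq_preimage]
  exact (PiLp.volume_preserving_ofLp (Fin 2)).measurable
    (MeasurableSet.univ_pi fun _ => measurableSet_Icc)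

lemma volume_euclideanSquare : volume euclideanSquare = 4 := by
  rw [euclideanSquare_eq_preimage,
    (PiLp.volume_preserving_ofLp (Fin 2)).measure_preimage
      (MeasurableSet.univ_pi fun _ => measurableSet_Icc).nullMeasurableSet, volume_pi_pi]
  norm_num [Real.volume_Icc, ← ENNReal.ofReal_mul]

lemma isCompact_euclideanSquare : IsCompact euclideanSquare := by
  rw [euclideanSquare_eq_preimage]
  exact (PiLp.homeomorph 2 (fun _ : Fin 2 => ℝ)).isCompact_preimage.2
    (isCompact_univ_pi fun _ => isCompact_Icc)

/-- Fubini on the square, for products of functions of one coordinate. -/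
lemma setIntegral_euclideanSquare_prod (f : Fin 2 → ℝ → ℝ) :
    ∫ x in euclideanSquare, ∏ i, f i (x i) = ∏ i, ∫ t in Set.Icc (-1:ℝ) 1, f i t := by
  rw [euclideanSquare_eq_preimage,
    (PiLp.volume_preserving_ofLp (Fin 2)).setIntegral_preimage_emb
      (MeasurableEquiv.toLp 2 (Fin 2 → ℝ)).symm.measurableEmbedding
      (fun y : Fin 2 → ℝ => ∏ i, f i (y i)),
    volume_pi, Measure.restrict_pi_pi, integral_fintype_prod_eq_prod]

lemma setIntegral_euclideanSquare_sq : ∫ x in euclideanSquare, x 0 ^ 2 = 4 / 3 := by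
  have h := setIntegral_euclideanSquare_prod ![fun t => t ^ 2, fun _ => 1]
  simp only [Fin.prod_univ_two, Matrix.cons_val_zero, Matrix.cons_val_one, mul_one] at h
  rw [h, integral_Icc_eq_integral_Ioc, ← intervalIntegral.integral_of_le (by norm_num)]
  norm_num [integral_pow]

lemma setIntegral_comp_isometry
    (T : EuclideanSpace ℝ (Fin 2) ≃ₗᵢ[ℝ] EuclideanSpace ℝ (Fin 2))
    {A : Set (EuclideanSpace ℝ (Fin 2))} (hA : T ⁻¹' A = A)
    (g : EuclideanSpace ℝ (Fin 2) → ℝ) :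
    ∫ x in A, g (T x) = ∫ x in A, g x := by
  have h := T.measurePreserving.setIntegral_preimage_emb
    T.toHomeomorph.measurableEmbedding g A
  rwa [hA] at h

lemma preimage_ball_isometry
    (T : EuclideanSpace ℝ (Fin 2) ≃ₗᵢ[ℝ] EuclideanSpace ℝ (Fin 2)) (R : ℝ) :
    T ⁻¹' Metric.ball 0 R = Metric.ball 0 R := by
  ext x
  simp

/-- The exchange of the two coordinates. -/
noncomputable def coordSwap : EuclideanSpace ℝ (Fin 2) ≃ₗᵢ[ℝ] EuclideanSpace ℝ (Fin 2) :=
  LinearIsometryEquiv.piLpCongrLeft 2 ℝ ℝ (Equiv.swap 0 1)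

lemma coordSwap_zero (x : EuclideanSpace ℝ (Fin 2)) : coordSwap x 0 = x 1 := by
  simp [coordSwap, LinearIsometryEquiv.piLpCongrLeft_apply, Equiv.piCongrLeft']

lemma coordSwap_one (x : EuclideanSpace ℝ (Fin 2)) : coordSwap x 1 = x 0 := by
  simp [coordSwap, LinearIsometryEquiv.piLpCongrLeft_apply, Equiv.piCongrLeft']

/-- The reflection changing the sign of the coordinate `i`. -/
noncomputable def coordReflect (i : Fin 2) :
    EuclideanSpace ℝ (Fin 2) ≃ₗᵢ[ℝ] EuclideanSpace ℝ (Fin 2) :=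
  LinearIsometryEquiv.piLpCongrRight 2
    fun j => if j = i then LinearIsometryEquiv.neg ℝ else LinearIsometryEquiv.refl ℝ ℝ

lemma coordReflect_apply (i j : Fin 2) (x : EuclideanSpace ℝ (Fin 2)) :
    coordReflect i x j = if j = i then -x j else x j := by
  simp only [coordReflect, LinearIsometryEquiv.piLpCongrRight_apply]
  split_ifs <;> simp

lemma coordSwap_preimage_square : coordSwap ⁻¹' euclideanSquare = euclideanSquare := by
  ext x
  simp only [euclideanSquare, Set.mem_preimage, Set.mem_ofPred_eq, Fin.forall_fin_two,
    coordSwap_zero, coordSwap_one]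
  exact and_comm

lemma coordReflect_preimage_square (i : Fin 2) :
    coordReflect i ⁻¹' euclideanSquare = euclideanSquare := by
  ext x
  simp only [euclideanSquare, Set.mem_preimage, Set.mem_ofPred_eq, coordReflect_apply]
  refine forall_congr' fun j => ?_
  split_ifs
  · simp only [Set.mem_Icc]
    constructor <;> rintro ⟨h1, h2⟩ <;> constructor <;> linarith
  · rfl

lemma setIntegral_ball_norm_sq {R : ℝ} (hR : 0 ≤ R) :
    ∫ x in Metric.ball (0 : EuclideanSpace ℝ (Fin 2)) R, ‖x‖ ^ 2 = Real.pi * R ^ 4 / 2 := by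
  -- Absorbing the domain into a radial integrand puts the integral in the form that the polar
  -- coordinate formula `integral_fun_norm_addHaar` treats.
  have h1 : ∫ x in Metric.ball (0 : EuclideanSpace ℝ (Fin 2)) R, ‖x‖ ^ 2
      = ∫ x : EuclideanSpace ℝ (Fin 2), (Set.Iio R).indicator (fun y : ℝ => y ^ 2) ‖x‖ := by
    rw [← integral_indicator measurableSet_ball]
    congr 1 with x
    by_cases hx : ‖x‖ < R <;> simp [hx]
  have h2 : ∫ y in Set.Ioi (0:ℝ), y ^ (2 - 1) • (Set.Iio R).indicator (fun y : ℝ => y ^ 2) y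
      = R ^ 4 / 4 := by
    have : ∀ y : ℝ, y ^ (2 - 1) • (Set.Iio R).indicator (fun y : ℝ => y ^ 2) y
        = (Set.Iio R).indicator (fun y : ℝ => y ^ 3) y := by
      intro y
      by_cases hy : y ∈ Set.Iio R
      · simp only [Set.indicator_of_mem hy, smul_eq_mul]
        ring
      · simp [Set.indicator_of_notMem hy]
    simp_rw [this]
    rw [setIntegral_indicator measurableSet_Iio, Set.Ioi_inter_Iio,
      ← integral_Ioc_eq_integral_Ioo, ← intervalIntegral.integral_of_le hR, integral_pow]
    norm_num
  rw [h1, integral_fun_norm_addHaar volume, finrank_euclideanSpace_fin, h2, measureReal_def,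
    EuclideanSpace.volume_ball_fin_two]
  simp [ENNReal.toReal_ofReal Real.pi_pos.le]
  ring

lemma continuous_coord (i : Fin 2) : Continuous fun x : EuclideanSpace ℝ (Fin 2) => x i :=
  (EuclideanSpace.proj (𝕜 := ℝ) i).continuous

/-- By symmetry under exchanging the coordinates, `x₀²` contributes half of `‖x‖²`. -/
lemma setIntegral_ball_sq {R : ℝ} (hR : 0 ≤ R) :
    ∫ x in Metric.ball (0 : EuclideanSpace ℝ (Fin 2)) R, x 0 ^ 2 = Real.pi * R ^ 4 / 4 := by
  have hint : ∀ i : Fin 2, IntegrableOn (fun x : EuclideanSpace ℝ (Fin 2) => x i ^ 2)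
      (Metric.ball 0 R) := fun i =>
    (((continuous_coord i).pow 2).continuousOn.integrableOn_compact
      (isCompact_closedBall 0 R)).mono_set Metric.ball_subset_closedBall
  have h := setIntegral_ball_norm_sq hR
  simp_rw [EuclideanSpace.real_norm_sq_eq, Fin.sum_univ_two] at h
  rw [integral_add (hint 0) (hint 1)] at h
  have hs := setIntegral_comp_isometry coordSwap (preimage_ball_isometry coordSwap R)
    (fun x => x 0 ^ 2)
  simp only [coordSwap_zero] at hs
  linarith

lemma ball_subset_euclideanSquare {R : ℝ} (hR1 : R ≤ 1) :
    Metric.ball 0 R ⊆ euclideanSquare := by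
  intro x hx i
  have h1 : ‖x i‖ ≤ ‖x‖ := PiLp.norm_apply_le x i
  rw [mem_ball_zero_iff] at hx
  rw [Real.norm_eq_abs] at h1
  exact abs_le.1 (by linarith)

/-- The moments of order at most two of Lebesgue measure on the square minus a ball. -/
lemma square_diff_ball_moments {R : ℝ} (hR : 0 ≤ R) (hR1 : R ≤ 1)
    {S : Set (EuclideanSpace ℝ (Fin 2))} (hS : S = euclideanSquare \ Metric.ball 0 R) :
    volume S = ENNReal.ofReal (4 - Real.pi * R ^ 2)
      ∧ ∫ x in S, x 0 = 0 ∧ ∫ x in S, x 1 = 0 ∧ ∫ x in S, x 0 * x 1 = 0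
      ∧ ∫ x in S, x 0 ^ 2 = 4 / 3 - Real.pi * R ^ 4 / 4
      ∧ ∫ x in S, x 1 ^ 2 = 4 / 3 - Real.pi * R ^ 4 / 4 := by
  have hrefl : ∀ i, coordReflect i ⁻¹' S = S := fun i => by
    rw [hS, Set.preimage_sdiff, coordReflect_preimage_square, preimage_ball_isometry]
  have hswap : coordSwap ⁻¹' S = S := by
    rw [hS, Set.preimage_sdiff, coordSwap_preimage_square, preimage_ball_isometry]
  have hsq : ∫ x in S, x 0 ^ 2 = 4 / 3 - Real.pi * R ^ 4 / 4 := by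
    have hint : IntegrableOn (fun x : EuclideanSpace ℝ (Fin 2) => x 0 ^ 2) euclideanSquare :=
      ((continuous_coord 0).pow 2).continuousOn.integrableOn_compact isCompact_euclideanSquare
    rw [hS, setIntegral_sdiff measurableSet_ball hint
      (ball_subset_euclideanSquare hR1), setIntegral_euclideanSquare_sq, setIntegral_ball_sq hR]
  refine ⟨?_, ?_, ?_, ?_, hsq, ?_⟩
  · rw [hS, measure_sdiff (ball_subset_euclideanSquare hR1) measurableSet_ball.nullMeasurableSet
      measure_ball_lt_top.ne, volume_euclideanSquare, EuclideanSpace.volume_ball_fin_two,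
      ENNReal.ofReal_sub _ (by positivity), mul_comm Real.pi, ENNReal.ofReal_mul (by positivity),
      ENNReal.ofReal_pow hR]
    norm_num
  · have h := setIntegral_comp_isometry (coordReflect 0) (hrefl 0) (fun x => x 0)
    simp only [coordReflect_apply, if_true, integral_neg] at h
    linarith
  · have h := setIntegral_comp_isometry (coordReflect 1) (hrefl 1) (fun x => x 1)
    simp only [coordReflect_apply, if_true, integral_neg] at h
    linarith
  · have h := setIntegral_comp_isometry (coordReflect 0) (hrefl 0) (fun x => x 0 * x 1)
    simp only [coordReflect_apply, if_true, one_ne_zero, if_false, neg_mul, integral_neg] at h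
    linarith
  · have h := setIntegral_comp_isometry coordSwap hswap (fun x => x 0 ^ 2)
    simp only [coordSwap_zero] at h
    rw [h, hsq]

/-- Optimal information matrix for D-optimal bounded-design selection in multilinear
regression with intercept on uniform data on `[−1,1]²`: for `α ∈ [1 − π/4, 1)`, with
`R_α = 2√((1−α)/π)` and `S = [−1,1]² \ B₂(0,R_α)`, the uniform measure `μ` on the square
satisfies `μ(S) = α` and `(1/α)∫_S f(x)f(x)ᵀ μ(dx) = diag{1, ρ_α, ρ_α}` where
`f(x) = (1, x₁, x₂)ᵀ` and `ρ_α = (1/(2α))[2/3 − 2(1−α)²/π]`. -/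
theorem uniform_square_minus_ball_information (α : ℝ)
    (hα : 1 - Real.pi / 4 ≤ α) (hα1 : α < 1)
    (Q : Set (EuclideanSpace ℝ (Fin 2)))
    (hQ : Q = {x : EuclideanSpace ℝ (Fin 2) | ∀ i, x i ∈ Set.Icc (-1:ℝ) 1})
    (μ : Measure (EuclideanSpace ℝ (Fin 2)))
    (hμ : μ = ENNReal.ofReal (1 / 4) • volume.restrict Q)
    (S : Set (EuclideanSpace ℝ (Fin 2)))
    (hS : S = Q \ Metric.ball (0 : EuclideanSpace ℝ (Fin 2)) (2 * Real.sqrt ((1 - α) / Real.pi))) :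
    μ S = ENNReal.ofReal α
    ∧ (Matrix.of fun j k : Fin 3 =>
          (1 / α) * ∫ x in S, (![1, x 0, x 1] j) * (![1, x 0, x 1] k) ∂μ)
        = Matrix.diagonal
            ![1, (1 / (2 * α)) * (2 / 3 - 2 * (1 - α) ^ 2 / Real.pi),
                (1 / (2 * α)) * (2 / 3 - 2 * (1 - α) ^ 2 / Real.pi)] := by
  have hπ := Real.pi_pos
  -- `1 - π/4 > 0`, so the factor `1/α` is a genuine inverse.
  have hα0 : 0 < α := by
    have := Real.pi_lt_four
    linarith
  set R := 2 * Real.sqrt ((1 - α) / Real.pi) with hRdef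
  have hR : 0 ≤ R := by positivity
  have hsqrt : Real.sqrt ((1 - α) / Real.pi) ^ 2 = (1 - α) / Real.pi :=
    Real.sq_sqrt (div_nonneg (by linarith) hπ.le)
  have hR2 : R ^ 2 = 4 * ((1 - α) / Real.pi) := by
    rw [hRdef, mul_pow, hsqrt]
    norm_num
  have hR1 : R ≤ 1 := by
    have h : (1 - α) / Real.pi ≤ 1 / 4 := by
      rw [div_le_iff₀ hπ]
      linarith
    nlinarith
  have hQ' : Q = euclideanSquare := hQ
  subst hQ'
  obtain ⟨hvol, h0, h1, h01, h00, h11⟩ := square_diff_ball_moments hR hR1 hS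
  have hSQ : S ⊆ euclideanSquare := hS ▸ Set.sdiff_subset
  have hSm : MeasurableSet S := hS ▸ measurableSet_euclideanSquare.diff measurableSet_ball
  have harea : 4 - Real.pi * R ^ 2 = 4 * α := by
    rw [hR2]
    field_simp
    ring
  have hmom : 4 / 3 - Real.pi * R ^ 4 / 4 = 4 / 3 - 4 * (1 - α) ^ 2 / Real.pi := by
    rw [show R ^ 4 = (R ^ 2) ^ 2 by ring, hR2]
    field_simp
  rw [harea] at hvol
  rw [hmom] at h00 h11
  have hμr : μ.restrict S = ENNReal.ofReal (1 / 4) • volume.restrict S := by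
    rw [hμ, Measure.restrict_smul, Measure.restrict_restrict hSm,
      Set.inter_eq_left.2 hSQ]
  have hint : ∀ g : EuclideanSpace ℝ (Fin 2) → ℝ,
      ∫ x in S, g x ∂μ = 1 / 4 * ∫ x in S, g x := by
    intro g
    rw [hμr, integral_smul_measure, ENNReal.toReal_ofReal (by norm_num), smul_eq_mul]
  have hone : ∫ _ in S, (1:ℝ) = 4 * α := by
    rw [setIntegral_const, measureReal_def, hvol, ENNReal.toReal_ofReal (by linarith)]
    simp
  have h10 : ∫ x in S, x 1 * x 0 = 0 := by
    simp_rw [mul_comm, h01]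
  constructor
  · rw [← Measure.restrict_apply_self, hμr, Measure.smul_apply, Measure.restrict_apply_self,
      hvol, smul_eq_mul, ← ENNReal.ofReal_mul (by norm_num)]
    congr 1
    ring
  · simp only [pow_two] at h00 h11
    ext j k
    simp only [Matrix.of_apply, hint]
    fin_cases j <;> fin_cases k <;>
      simp [h0, h1, h01, h10, h00, h11, -integral_const, hone, -one_div]
    all_goals field_simp
end

section
/- Let μ be the uniform probability measure on [−1,1]² (density 1/4), let α ∈ (0,1), and set a = α/2, b = α/(2−α), and S = [−1,1]² \ ([−1+a, 1−a] × [−1+b, 1−b]). Then μ(S) = α, and the matrix (1/α)∫_S x xᵀ μ(dx) is diagonal with entries D_{α,1} = (8 − 5α + α²)/12 and D_{α,2} = (8 − 11α + 4α²)/[3(2−α)²]; equivalently, with f(x) = (1, x₁, x₂)ᵀ, (1/α)∫_S f(x) f(x)ᵀ μ(dx) = diag{1, D_{α,1}, D_{α,2}}. -/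
open MeasureTheory

/-! The region `S` is the square `Q` minus a smaller box centred at the origin, so a moment over `S`
is the moment over `Q` minus the moment over the inner box. By Fubini a monomial moment over a
box `[-p, p] × [-q, q]` is a product of one-dimensional power integrals (`integral_box`), which vanish
for odd exponents; `moment_S` combines the two boxes. With `p = 1 - α/2` and `q = 1 - α/(2 - α)` one has `p q = 1 - α`, hence
`μ(S) = α`; the second moments over `S` are `(1 - (1 - α) p²)/3` and `(1 - (1 - α) q²)/3`, and
dividing them by `α` gives the diagonal entries. -/

/-- The box `[-p, p] × [-q, q]` in the Euclidean plane. -/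
def box (p q : ℝ) : Set (EuclideanSpace ℝ (Fin 2)) :=
  {x | x 0 ∈ Set.Icc (-p) p ∧ x 1 ∈ Set.Icc (-q) q}

/-- The coordinate map from the Euclidean plane to `ℝ × ℝ`. -/
def planeEquiv : EuclideanSpace ℝ (Fin 2) ≃ᵐ ℝ × ℝ :=
  (MeasurableEquiv.toLp 2 (Fin 2 → ℝ)).symm.trans MeasurableEquiv.finTwoArrow

lemma planeEquiv_preserving : MeasurePreserving planeEquiv volume volume :=
  (volume_preserving_finTwoArrow ℝ).comp
    (EuclideanSpace.volume_preserving_symm_measurableEquiv_toLp (Fin 2))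

lemma planeEquiv_apply (x : EuclideanSpace ℝ (Fin 2)) : planeEquiv x = (x 0, x 1) := rfl

lemma box_eq_preimage (p q : ℝ) :
    box p q = planeEquiv ⁻¹' (Set.Icc (-p) p ×ˢ Set.Icc (-q) q) := by
  ext x
  simp only [box, Set.mem_preimage, planeEquiv_apply, Set.mem_prod, Set.mem_ofPred_eq]

lemma measurableSet_box (p q : ℝ) : MeasurableSet (box p q) := by
  rw [box_eq_preimage]
  exact planeEquiv.measurable (measurableSet_Icc.prod measurableSet_Icc)

lemma integrableOn_box (p q : ℝ) (m n : ℕ) :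
    IntegrableOn (fun x : EuclideanSpace ℝ (Fin 2) => x 0 ^ m * x 1 ^ n) (box p q) := by
  rw [box_eq_preimage]
  refine (planeEquiv_preserving.integrableOn_comp_preimage planeEquiv.measurableEmbedding
    (f := fun z : ℝ × ℝ => z.1 ^ m * z.2 ^ n)).2 ?_
  exact ContinuousOn.integrableOn_compact (isCompact_Icc.prod isCompact_Icc) (by fun_prop)

/-- Fubini for a monomial over a box. -/
lemma integral_box {p q : ℝ} (hp : 0 ≤ p) (hq : 0 ≤ q) (m n : ℕ) :
    ∫ x in box p q, x 0 ^ m * x 1 ^ n =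
      ((p ^ (m + 1) - (-p) ^ (m + 1)) / (m + 1)) * ((q ^ (n + 1) - (-q) ^ (n + 1)) / (n + 1)) := by
  rw [box_eq_preimage]
  have h := planeEquiv_preserving.setIntegral_preimage_emb planeEquiv.measurableEmbedding
    (fun z : ℝ × ℝ => z.1 ^ m * z.2 ^ n) (Set.Icc (-p) p ×ˢ Set.Icc (-q) q)
  simp only [planeEquiv_apply] at h
  rw [h, Measure.volume_eq_prod, setIntegral_prod_mul (fun t : ℝ => t ^ m) (fun t : ℝ => t ^ n),
    integral_Icc_eq_integral_Ioc, integral_Icc_eq_integral_Ioc,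
    ← intervalIntegral.integral_of_le (by linarith), ← intervalIntegral.integral_of_le (by linarith),
    integral_pow, integral_pow]

/-- Moments over a difference of centred boxes for the uniform probability density `1/4`. -/
lemma moment_S {p q : ℝ} (hp : 0 ≤ p) (hp1 : p ≤ 1) (hq : 0 ≤ q) (hq1 : q ≤ 1) (m n : ℕ) :
    ∫ x in box 1 1 \ box p q, x 0 ^ m * x 1 ^ n
        ∂(ENNReal.ofReal (1 / 4) • volume.restrict (box 1 1)) =
      (1 / 4) * (((1 - (-1) ^ (m + 1)) / (m + 1)) * ((1 - (-1) ^ (n + 1)) / (n + 1))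
        - ((p ^ (m + 1) - (-p) ^ (m + 1)) / (m + 1))
          * ((q ^ (n + 1) - (-q) ^ (n + 1)) / (n + 1))) := by
  have hsub : box p q ⊆ box 1 1 := by
    rintro x ⟨⟨h1, h2⟩, h3, h4⟩
    exact ⟨⟨by linarith, by linarith⟩, by linarith, by linarith⟩
  rw [Measure.restrict_smul, Measure.restrict_restrict_of_subset Set.sdiff_subset,
    integral_smul_measure, setIntegral_sdiff (measurableSet_box p q) (integrableOn_box 1 1 m n) hsub,
    integral_box zero_le_one zero_le_one, integral_box hp hq,
    ENNReal.toReal_ofReal (by norm_num), smul_eq_mul]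
  simp only [one_pow]

/-- Asymptotic IBOSS selection region for multilinear regression with intercept on uniform
data on `[−1,1]²` (coordinates inspected in order 1, 2): with `a = α/2`, `b = α/(2−α)` and
`S = [−1,1]² \ ([−1+a,1−a] × [−1+b,1−b])`, the uniform measure `μ` on the square satisfies
`μ(S) = α`, the matrix `(1/α)∫_S x xᵀ μ(dx)` is diagonal with entries
`D_{α,1} = (8 − 5α + α²)/12` and `D_{α,2} = (8 − 11α + 4α²)/[3(2−α)²]`, and equivalently,
with `f(x) = (1, x₁, x₂)ᵀ`, `(1/α)∫_S f(x)f(x)ᵀ μ(dx) = diag{1, D_{α,1}, D_{α,2}}`. -/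
theorem uniform_square_IBOSS_information (α : ℝ) (hα : α ∈ Set.Ioo (0:ℝ) 1)
    (Q : Set (EuclideanSpace ℝ (Fin 2)))
    (hQ : Q = {x : EuclideanSpace ℝ (Fin 2) | ∀ i, x i ∈ Set.Icc (-1:ℝ) 1})
    (μ : Measure (EuclideanSpace ℝ (Fin 2)))
    (hμ : μ = ENNReal.ofReal (1 / 4) • volume.restrict Q)
    (S : Set (EuclideanSpace ℝ (Fin 2)))
    (hS : S = Q \ {x : EuclideanSpace ℝ (Fin 2) |
        x 0 ∈ Set.Icc (-1 + α / 2) (1 - α / 2)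
          ∧ x 1 ∈ Set.Icc (-1 + α / (2 - α)) (1 - α / (2 - α))}) :
    μ S = ENNReal.ofReal α
    ∧ (Matrix.of fun j k : Fin 2 => (1 / α) * ∫ x in S, x j * x k ∂μ)
        = Matrix.diagonal ![(8 - 5 * α + α ^ 2) / 12,
            (8 - 11 * α + 4 * α ^ 2) / (3 * (2 - α) ^ 2)]
    ∧ (Matrix.of fun j k : Fin 3 =>
          (1 / α) * ∫ x in S, (![1, x 0, x 1] j) * (![1, x 0, x 1] k) ∂μ)
        = Matrix.diagonal ![1, (8 - 5 * α + α ^ 2) / 12,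
            (8 - 11 * α + 4 * α ^ 2) / (3 * (2 - α) ^ 2)] := by
  obtain ⟨h0, h1⟩ := hα
  have h2 : 0 < 2 - α := by linarith
  have h2' : 2 - α ≠ 0 := h2.ne'
  have hQ' : Q = box 1 1 := by
    rw [hQ]
    ext x
    simp [box, Fin.forall_fin_two]
  have hS' : S = box 1 1 \ box (1 - α / 2) (1 - α / (2 - α)) := by
    rw [hS, hQ']
    simp only [box, sub_eq_neg_add, neg_add, neg_neg, add_comm]
  have hb0 : 0 ≤ α / (2 - α) := by positivity
  have hb1 : α / (2 - α) ≤ 1 := by rw [div_le_one h2]; linarith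
  have key := moment_S (p := 1 - α / 2) (q := 1 - α / (2 - α)) (by linarith) (by linarith)
    (by linarith) (by linarith)
  rw [← hS', ← hQ', ← hμ] at key
  have m00 : ∫ _ in S, (1 : ℝ) ∂μ = α := by
    have := key 0 0
    simp only [pow_zero, one_mul] at this
    rw [this]
    push_cast
    field_simp
    ring
  have m10 : ∫ x in S, x 0 ∂μ = 0 := by
    have := key 1 0
    simp only [pow_zero, pow_one, one_mul, mul_one] at this
    rw [this]
    ring
  have m01 : ∫ x in S, x 1 ∂μ = 0 := by
    have := key 0 1
    simp only [pow_zero, pow_one, one_mul, mul_one] at this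
    rw [this]
    ring
  have m11 : ∫ x in S, x 0 * x 1 ∂μ = 0 := by
    have := key 1 1
    simp only [pow_zero, pow_one, one_mul, mul_one] at this
    rw [this]
    ring
  have m11' : ∫ x in S, x 1 * x 0 ∂μ = 0 := by simpa only [mul_comm] using m11
  have m20 : α⁻¹ * ∫ x in S, x 0 * x 0 ∂μ = (8 - 5 * α + α ^ 2) / 12 := by
    have := key 2 0
    simp only [pow_zero, mul_one, pow_two] at this
    rw [this]
    push_cast
    field_simp
    ring
  have m02 : α⁻¹ * ∫ x in S, x 1 * x 1 ∂μ =
      (8 - 11 * α + 4 * α ^ 2) / (3 * (2 - α) ^ 2) := by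
    have := key 0 2
    simp only [pow_zero, one_mul, pow_two] at this
    rw [this]
    push_cast
    field_simp
    ring
  refine ⟨?_, ?_, ?_⟩
  · have hfin : μ S ≠ ⊤ := by
      -- an infinite mass would make the integral of the constant `1` equal to `0`, not `α`
      intro h
      rw [setIntegral_const, Measure.real, h] at m00
      simp at m00
      linarith
    rw [← ENNReal.ofReal_toReal hfin]
    congr 1
    simpa [Measure.real] using m00
  · ext j k
    fin_cases j <;> fin_cases k <;> simp [m11, m11', m20, m02]
  · ext j k
    fin_cases j <;> fin_cases k <;> simp [-integral_const, m00, m10, m01, m11, m11', m20, m02, h0.ne']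
end
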